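/- arXiv:2311.07266 — 4 statements merged into one kernel-verified Lean document; each statement's English description precedes it below -/
import Mathlib

section
/- Let (Ω, μ) be a probability space, let n ≥ 1, and for each i ∈ Fin n let Uᵢ, Dᵢ : Ω → Bool be measurable random variables (Uᵢ ω = true representing outcome +1 of the observable Uᵢ, and Dᵢ ω = true representing outcome +1 of the observable Dᵢ). Then μ{ω | ∀ i, Uᵢ ω = true} ≤ (∑_{i ∈ Fin n} μ{ω | Dᵢ ω = true ∧ U_{i+1} ω = true}) + μ{ω | ∀ i, Dᵢ ω = false}, where the index i+1 is taken cyclically in Fin n. In particular, in any local hidden-variable model in which the n+1 probabilities on the right-hand side all vanish, the Hardy success probability μ{ω | ∀ i, Uᵢ ω = true} must vanish, so the generalized n-partite Hardy conditions cannot be satisfied with p > 0 by any local realistic theory. -/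
open MeasureTheory

/-- **Local bound for the generalized n-partite Hardy argument.**
In a local hidden-variable model, realized on a common probability space
`(Ω, μ)` with measurable `Bool`-valued random variables `Uᵢ, Dᵢ`
(`true` encoding outcome `+1`), the Hardy success probability
`μ {ω | ∀ i, Uᵢ ω = true}` is at most the sum of the `n` probabilities
`μ {ω | Dᵢ ω = true ∧ U_{i+1} ω = true}` (index `i+1` cyclic in `Fin n`)
plus `μ {ω | ∀ i, Dᵢ ω = false}`.  In particular if all `n + 1`
probabilities on the right vanish then the Hardy success probability
vanishes, so the generalized Hardy conditions cannot hold with `p > 0`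
in any local realistic theory. -/
theorem hardy_local_bound {Ω : Type*} [MeasurableSpace Ω]
    (μ : Measure Ω) [IsProbabilityMeasure μ]
    (n : ℕ) [NeZero n] (hn : 1 ≤ n)
    (U D : Fin n → Ω → Bool)
    (hU : ∀ i, Measurable (U i)) (hD : ∀ i, Measurable (D i)) :
    μ {ω | ∀ i, U i ω = true} ≤
      (∑ i : Fin n, μ {ω | D i ω = true ∧ U (i + 1) ω = true}) +
        μ {ω | ∀ i, D i ω = false} := by
  have hsub : {ω | ∀ i, U i ω = true} ⊆
      (⋃ i : Fin n, {ω | D i ω = true ∧ U (i + 1) ω = true}) ∪ {ω | ∀ i, D i ω = false} := by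
    intro ω hω
    by_cases h : ∀ i, D i ω = false
    · exact Or.inr h
    · left
      obtain ⟨i, hi⟩ := not_forall.mp h
      exact Set.mem_iUnion.mpr ⟨i, by simpa using hi, hω (i + 1)⟩
  refine (measure_mono hsub).trans ((measure_union_le _ _).trans ?_)
  gcongr
  exact measure_iUnion_fintype_le μ _
end

section
/- Let (Ω, μ) be a probability space and let U₁, U₂, U₃, D₁, D₂, D₃ : Ω → Bool be measurable random variables (true encoding outcome +1). Let ε ≥ 0 and suppose μ{ω | D₁ ω = true ∧ U₂ ω = true} ≤ ε, μ{ω | D₂ ω = true ∧ U₃ ω = true} ≤ ε, μ{ω | U₁ ω = true ∧ D₃ ω = true} ≤ ε, and μ{ω | D₁ ω = false ∧ D₂ ω = false ∧ D₃ ω = false} ≤ ε. Then μ{ω | U₁ ω = true ∧ U₂ ω = true ∧ U₃ ω = true} ≤ 4ε. -/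
open MeasureTheory

/-- **Local bound for the noise-tolerant tripartite Hardy test.**
In a local hidden-variable model on a probability space `(Ω, μ)` with
measurable `Bool`-valued random variables `U₁, U₂, U₃, D₁, D₂, D₃`
(`true` encoding outcome `+1`), if the four Hardy "zero" probabilities are
each at most `ε ≥ 0`, then `P(+1,+1,+1 | U₁,U₂,U₃) ≤ 4ε`. -/
theorem hardy_tripartite_noisy_local_bound {Ω : Type*} [MeasurableSpace Ω]
    (μ : Measure Ω) [IsProbabilityMeasure μ]
    (U₁ U₂ U₃ D₁ D₂ D₃ : Ω → Bool)
    (hU₁ : Measurable U₁) (hU₂ : Measurable U₂) (hU₃ : Measurable U₃)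
    (hD₁ : Measurable D₁) (hD₂ : Measurable D₂) (hD₃ : Measurable D₃)
    (ε : ℝ) (hε : 0 ≤ ε)
    (h₁ : μ {ω | D₁ ω = true ∧ U₂ ω = true} ≤ ENNReal.ofReal ε)
    (h₂ : μ {ω | D₂ ω = true ∧ U₃ ω = true} ≤ ENNReal.ofReal ε)
    (h₃ : μ {ω | U₁ ω = true ∧ D₃ ω = true} ≤ ENNReal.ofReal ε)
    (h₄ : μ {ω | D₁ ω = false ∧ D₂ ω = false ∧ D₃ ω = false} ≤ ENNReal.ofReal ε) :
    μ {ω | U₁ ω = true ∧ U₂ ω = true ∧ U₃ ω = true} ≤ ENNReal.ofReal (4 * ε) := by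
  have e : ENNReal.ofReal (4 * ε) = ENNReal.ofReal ε + ENNReal.ofReal ε + ENNReal.ofReal ε
      + ENNReal.ofReal ε := by
    rw [← ENNReal.ofReal_add hε hε, ← ENNReal.ofReal_add (by positivity) hε,
      ← ENNReal.ofReal_add (by positivity) hε]
    congr 1
    ring
  rw [e]
  have hsub : {ω | U₁ ω = true ∧ U₂ ω = true ∧ U₃ ω = true} ⊆
      (({ω | D₁ ω = true ∧ U₂ ω = true} ∪ {ω | D₂ ω = true ∧ U₃ ω = true}) ∪
        {ω | U₁ ω = true ∧ D₃ ω = true}) ∪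
        {ω | D₁ ω = false ∧ D₂ ω = false ∧ D₃ ω = false} := by
    rintro ω ⟨a, b, c⟩
    simp only [Set.mem_union, Set.mem_setOf_eq, a, b, c]
    cases D₁ ω <;> cases D₂ ω <;> cases D₃ ω <;> simp
  refine (measure_mono hsub).trans ?_
  refine (measure_union_le _ _).trans (add_le_add ?_ h₄)
  refine (measure_union_le _ _).trans (add_le_add ?_ h₃)
  exact (measure_union_le _ _).trans (add_le_add h₁ h₂)
end

section
/- Let n ≥ 2 and let t be the unique real number in (0,1) with ∑_{k=1}^{n} t^k = 1. Define g : (0,1) → ℝ by g(s) = s^n (1−s)^n / (1 − s^n). Then for every s ∈ (0,1), g(s) ≤ g(t) = t^n (1−t)^n / (1 − t^n), with equality if and only if s = t. -/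
theorem hardy_aux_sum (n : ℕ) (x : ℝ) :
    (1 - x) * (1 - ∑ k ∈ Finset.Icc 1 n, x ^ k) = 1 - 2 * x + x ^ (n + 1) := by
  induction n with
  | zero => simp; ring
  | succ k ih =>
    rw [Finset.sum_Icc_succ_top (by omega)]
    linear_combination ih

theorem hardy_aux_lt (n : ℕ) (hn : 2 ≤ n) (x y : ℝ) (hx : 0 < x) (hxy : x < y) :
    ∑ k ∈ Finset.Icc 1 n, x ^ k < ∑ k ∈ Finset.Icc 1 n, y ^ k := by
  apply Finset.sum_lt_sum_of_nonempty ⟨1, by simp; omega⟩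
  intro k hk
  have := (Finset.mem_Icc.1 hk).1
  exact pow_lt_pow_left₀ hxy hx.le (by omega)

theorem hardy_aux_deriv (n : ℕ) (hn : 2 ≤ n) (x : ℝ) (h0 : 0 < x) (h1 : x < 1) :
    HasDerivAt (fun s : ℝ => s ^ n * (1 - s) ^ n / (1 - s ^ n))
      (n * (x * (1 - x)) ^ (n - 1) / (1 - x ^ n) ^ 2 *
        ((1 - x) * (1 - ∑ k ∈ Finset.Icc 1 n, x ^ k))) x := by
  have hp : x ^ n < 1 := pow_lt_one₀ h0.le h1 (by omega)
  have hne : 1 - x ^ n ≠ 0 := by linarith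
  rw [hardy_aux_sum]
  have a := hasDerivAt_pow n x
  have b := ((hasDerivAt_id' x).const_sub 1).pow n
  have c := (a.mul b).div (a.const_sub 1) hne
  refine c.congr_deriv ?_
  obtain ⟨m, rfl⟩ : ∃ m, n = m + 1 := ⟨n - 1, by omega⟩
  simp only [Nat.add_sub_cancel, Pi.mul_apply, Pi.pow_apply, mul_pow]
  field_simp
  ring

theorem hardy_symmetric_probability_maximized (n : ℕ) (hn : 2 ≤ n)
    (t : ℝ) (ht : t ∈ Set.Ioo (0 : ℝ) 1)
    (htsum : ∑ k ∈ Finset.Icc 1 n, t ^ k = 1) :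
    ∀ s ∈ Set.Ioo (0 : ℝ) 1,
      s ^ n * (1 - s) ^ n / (1 - s ^ n) ≤ t ^ n * (1 - t) ^ n / (1 - t ^ n) ∧
      (s ^ n * (1 - s) ^ n / (1 - s ^ n) = t ^ n * (1 - t) ^ n / (1 - t ^ n)
        ↔ s = t) := by
  obtain ⟨t0, t1⟩ := ht
  have key : ∀ x : ℝ, 0 < x → x < 1 →
      0 < n * (x * (1 - x)) ^ (n - 1) / (1 - x ^ n) ^ 2 * (1 - x) := by
    intro x h0 h1
    have hp : x ^ n < 1 := pow_lt_one₀ h0.le h1 (by omega)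
    have h2 : 0 < 1 - x ^ n := by linarith
    have h3 : 0 < 1 - x := by linarith
    have h4 : (0 : ℝ) < n := by exact_mod_cast (by omega : 0 < n)
    positivity
  have mono : StrictMonoOn (fun s : ℝ => s ^ n * (1 - s) ^ n / (1 - s ^ n)) (Set.Ioc 0 t) := by
    apply strictMonoOn_of_deriv_pos (convex_Ioc 0 t)
    · intro x hx
      exact (hardy_aux_deriv n hn x hx.1 (hx.2.trans_lt t1)).continuousAt.continuousWithinAt
    · intro x hx
      rw [interior_Ioc] at hx
      have h1 := hx.2.trans t1
      rw [(hardy_aux_deriv n hn x hx.1 h1).deriv, ← mul_assoc]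
      have := hardy_aux_lt n hn x t hx.1 hx.2
      exact mul_pos (key x hx.1 h1) (by linarith)
  have anti : StrictAntiOn (fun s : ℝ => s ^ n * (1 - s) ^ n / (1 - s ^ n)) (Set.Ico t 1) := by
    apply strictAntiOn_of_deriv_neg (convex_Ico t 1)
    · intro x hx
      exact (hardy_aux_deriv n hn x (t0.trans_le hx.1) hx.2).continuousAt.continuousWithinAt
    · intro x hx
      rw [interior_Ico] at hx
      have h0 := t0.trans hx.1
      rw [(hardy_aux_deriv n hn x h0 hx.2).deriv, ← mul_assoc]
      have := hardy_aux_lt n hn t x t0 hx.1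
      exact mul_neg_of_pos_of_neg (key x h0 hx.2) (by linarith)
  rintro s ⟨s0, s1⟩
  rcases lt_trichotomy s t with h | h | h
  · have := mono ⟨s0, h.le⟩ ⟨t0, le_rfl⟩ h
    exact ⟨this.le, fun e => absurd e this.ne, fun e => absurd e h.ne⟩
  · subst h
    simp
  · have := anti ⟨le_rfl, t1⟩ ⟨h.le, s1⟩ h
    exact ⟨this.le, fun e => absurd e this.ne, fun e => absurd e h.ne'⟩
end

section
/- Let n ≥ 2 and let t be the unique real number in (0,1) with ∑_{k=1}^{n} t^k = 1. For all t₁, …, tₙ ∈ (0,1), one has (∏_{i=1}^{n} t_i (1 − t_i)) / (1 − ∏_{i=1}^{n} t_i) ≤ t^n (1−t)^n / (1 − t^n), with equality if and only if t_i = t for every i. Consequently the maximum probability of success of the generalized n-partite Hardy argument over all n-qubit strategies is p_max = t^n (1−t)^n / (1 − t^n), attained exactly when all local measurement parameters |α_i|² are equal to t. -/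
theorem hardy_tangent (s x : ℝ) (hs : s ∈ Set.Ioo (0:ℝ) 1) (hx : x ∈ Set.Ioo (0:ℝ) 1) :
    Real.log (1 - x) ≤ Real.log (1 - s) - s / (1 - s) * (Real.log x - Real.log s) ∧
    (Real.log (1 - x) = Real.log (1 - s) - s / (1 - s) * (Real.log x - Real.log s) → x = s) := by
  obtain ⟨hs0, hs1⟩ := hs
  obtain ⟨hx0, hx1⟩ := hx
  have h1s : 0 < 1 - s := by linarith
  have h1x : 0 < 1 - x := by linarith
  have h1 : Real.log (1 - x) - Real.log (1 - s) ≤ (1 - x) / (1 - s) - 1 := by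
    rw [← Real.log_div h1x.ne' h1s.ne']
    exact Real.log_le_sub_one_of_pos (by positivity)
  have hr : 0 < s / (1 - s) := by positivity
  have e : s / (1 - s) * (x / s - 1) = -((1 - x) / (1 - s) - 1) := by
    field_simp
    ring
  have h2 : Real.log x - Real.log s ≤ x / s - 1 := by
    rw [← Real.log_div hx0.ne' hs0.ne']
    exact Real.log_le_sub_one_of_pos (by positivity)
  refine ⟨by nlinarith, fun h => ?_⟩
  by_contra hne
  have h3 : Real.log x - Real.log s < x / s - 1 := by
    rw [← Real.log_div hx0.ne' hs0.ne']
    apply Real.log_lt_sub_one_of_pos (by positivity)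
    intro h
    exact hne (by rwa [div_eq_one_iff_eq hs0.ne'] at h)
  nlinarith

theorem hardy_csum (t : ℝ) (n : ℕ) :
    (1 - t) * ∑ k ∈ Finset.range n, (k : ℝ) * t ^ (k + 1)
      = ∑ k ∈ Finset.range n, t ^ (k + 1) - t - (n - 1) * t ^ (n + 1) := by
  induction n with
  | zero => simp
  | succ n ih =>
    rw [Finset.sum_range_succ, Finset.sum_range_succ, mul_add, ih]
    push_cast
    ring

theorem hardy_onevar (n : ℕ) (hn : 2 ≤ n) (t s : ℝ) (ht : t ∈ Set.Ioo (0 : ℝ) 1)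
    (hs : s ∈ Set.Ioo (0 : ℝ) 1)
    (htsum : ∑ k ∈ Finset.range n, t ^ (k + 1) = 1) :
    n * Real.log s + n * Real.log (1 - s) - Real.log (1 - s ^ n) ≤
      n * Real.log t + n * Real.log (1 - t) - Real.log (1 - t ^ n) ∧
    (n * Real.log s + n * Real.log (1 - s) - Real.log (1 - s ^ n) =
      n * Real.log t + n * Real.log (1 - t) - Real.log (1 - t ^ n) → s = t) := by
  have htan := hardy_tangent t s ht hs
  obtain ⟨ht0, ht1⟩ := ht
  obtain ⟨hs0, hs1⟩ := hs
  have h1t : 0 < 1 - t := by linarith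
  have h1s : 0 < 1 - s := by linarith
  have hn' : (1:ℝ) < n := by exact_mod_cast hn
  have hgt : t * ∑ k ∈ Finset.range n, t ^ k = 1 := by
    rw [← htsum, Finset.mul_sum]
    exact Finset.sum_congr rfl fun k _ => by ring
  have hgt' : ∑ k ∈ Finset.range n, t ^ k = t⁻¹ := by
    field_simp
    linarith
  have geo : ∀ x : ℝ, (1 - x) * ∑ k ∈ Finset.range n, x ^ k = 1 - x ^ n := fun x => mul_neg_geom_sum x n
  have hS : 0 < ∑ k ∈ Finset.range n, s ^ k :=
    Finset.sum_pos (fun k _ => by positivity) ⟨0, by simp; omega⟩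
  have et : Real.log (1 - t ^ n) = Real.log (1 - t) - Real.log t := by
    rw [← geo t, hgt', Real.log_mul h1t.ne' (by positivity), Real.log_inv]
    ring
  have es : Real.log (1 - s ^ n) = Real.log (1 - s) + Real.log (∑ k ∈ Finset.range n, s ^ k) := by
    rw [← geo s, Real.log_mul h1s.ne' hS.ne']
  set c := ∑ k ∈ Finset.range n, (k : ℝ) * t ^ (k + 1) with hc
  have hcs := hardy_csum t n
  rw [← hc, htsum] at hcs
  have htn : t ^ (n + 1) = 2 * t - 1 := by
    have := geo t
    rw [hgt'] at this
    have h2 : t * ((1 - t) * t⁻¹) = 1 - t := by field_simp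
    rw [this] at h2
    rw [pow_succ]
    linarith
  have hc2 : n - c = (n - 1) * (t / (1 - t)) := by
    rw [htn] at hcs
    field_simp
    linarith
  have hJ : ∑ k ∈ Finset.range n, t ^ (k + 1) * Real.log (s ^ k / t ^ (k + 1)) ≤
      Real.log (∑ k ∈ Finset.range n, s ^ k) := by
    have := strictConcaveOn_log_Ioi.concaveOn.le_map_sum (t := Finset.range n)
      (w := fun k => t ^ (k + 1)) (p := fun k => s ^ k / t ^ (k + 1))
      (fun k _ => by positivity) htsum (fun k _ => by
        rw [Set.mem_Ioi]
        positivity)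
    simp only [smul_eq_mul] at this
    refine this.trans_eq ?_
    congr 1
    exact Finset.sum_congr rfl fun k _ => by field_simp
  have hJ2 : ∑ k ∈ Finset.range n, t ^ (k + 1) * Real.log (s ^ k / t ^ (k + 1)) =
      c * (Real.log s - Real.log t) - Real.log t := by
    have : ∀ k ∈ Finset.range n, t ^ (k + 1) * Real.log (s ^ k / t ^ (k + 1)) =
        (k * t ^ (k + 1)) * (Real.log s - Real.log t) - t ^ (k + 1) * Real.log t := by
      intro k _
      rw [Real.log_div (by positivity) (by positivity), Real.log_pow, Real.log_pow]
      push_cast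
      ring
    rw [Finset.sum_congr rfl this, Finset.sum_sub_distrib, ← Finset.sum_mul, ← Finset.sum_mul,
      htsum, one_mul]
  rw [hJ2] at hJ
  rw [et, es]
  set a := Real.log s - Real.log t with ha
  have key : n * a - c * a = (n - 1) * (t / (1 - t) * a) := by
    rw [← sub_mul, hc2]
    ring
  have hna : (n:ℝ) * a = n * Real.log s - n * Real.log t := by rw [ha]; ring
  have hm := mul_le_mul_of_nonneg_left htan.1 (by linarith : (0:ℝ) ≤ n - 1)
  refine ⟨by linarith, fun h => htan.2 (le_antisymm htan.1 ?_)⟩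
  have : ((n:ℝ) - 1) * (Real.log (1 - t) - t / (1 - t) * a) ≤ (n - 1) * Real.log (1 - s) := by
    linarith
  exact le_of_mul_le_mul_left this (by linarith)

/-- **The maximal success probability of the generalized n-partite Hardy
argument.** Let `n ≥ 2` and let `t` be the unique number in `(0,1)` with
`∑_{k=1}^n t^k = 1`.  For all local parameters `t₁, …, tₙ ∈ (0,1)`,
`(∏ᵢ tᵢ(1−tᵢ)) / (1 − ∏ᵢ tᵢ) ≤ tⁿ(1−t)ⁿ/(1−tⁿ)`, with equality iff
`tᵢ = t` for every `i`.  Hence `p_max = tⁿ(1−t)ⁿ/(1−tⁿ)`, attained exactly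
when all local measurement parameters `|αᵢ|²` equal `t`. -/
theorem hardy_probability_maximized (n : ℕ) (hn : 2 ≤ n)
    (t : ℝ) (ht : t ∈ Set.Ioo (0 : ℝ) 1)
    (htsum : ∑ k ∈ Finset.Icc 1 n, t ^ k = 1)
    (ts : Fin n → ℝ) (hts : ∀ i, ts i ∈ Set.Ioo (0 : ℝ) 1) :
    (∏ i, ts i * (1 - ts i)) / (1 - ∏ i, ts i) ≤
        t ^ n * (1 - t) ^ n / (1 - t ^ n) ∧
      ((∏ i, ts i * (1 - ts i)) / (1 - ∏ i, ts i) =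
          t ^ n * (1 - t) ^ n / (1 - t ^ n) ↔ ∀ i, ts i = t) := by
  have hn0 : (0:ℝ) < n := by exact_mod_cast (by omega : 0 < n)
  have htsum' : ∑ k ∈ Finset.range n, t ^ (k + 1) = 1 := by
    rw [← htsum, Finset.range_eq_Ico, Finset.sum_Ico_add' (fun k => t ^ k) 0 n 1]
    rfl
  have hpos : ∀ i, 0 < ts i := fun i => (hts i).1
  have hpos1 : ∀ i, 0 < 1 - ts i := fun i => by linarith [(hts i).2]
  have hlneg : ∑ i, Real.log (ts i) < 0 :=
    Finset.sum_neg (fun i _ => Real.log_neg (hts i).1 (hts i).2) ⟨⟨0, by omega⟩, by simp⟩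
  set s : ℝ := Real.exp ((∑ i, Real.log (ts i)) / n) with hsdef
  have hls : n * Real.log s = ∑ i, Real.log (ts i) := by
    rw [hsdef, Real.log_exp]
    field_simp
  have hs : s ∈ Set.Ioo (0:ℝ) 1 :=
    ⟨Real.exp_pos _, Real.exp_lt_one_iff.2 (div_neg_of_neg_of_pos hlneg hn0)⟩
  have hP0 : 0 < ∏ i, ts i := Finset.prod_pos fun i _ => hpos i
  have hP : ∏ i, ts i = s ^ n := by
    apply Real.log_injOn_pos hP0 (pow_pos hs.1 n)
    rw [Real.log_prod (fun i _ => (hpos i).ne'), Real.log_pow, hls]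
  have hB := hardy_onevar n hn t s ht hs htsum'
  have hT := fun i => hardy_tangent s (ts i) hs (hts i)
  have hsumR : ∑ i, (Real.log (1 - s) - s / (1 - s) * (Real.log (ts i) - Real.log s)) =
      n * Real.log (1 - s) := by
    rw [Finset.sum_sub_distrib, ← Finset.mul_sum, Finset.sum_sub_distrib, ← hls]
    simp
  have hA : ∑ i, Real.log (1 - ts i) ≤ n * Real.log (1 - s) := by
    rw [← hsumR]
    exact Finset.sum_le_sum fun i _ => (hT i).1
  have hA2 : ∑ i, Real.log (1 - ts i) = n * Real.log (1 - s) → ∀ i, ts i = s := by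
    intro h i
    rw [← hsumR] at h
    exact (hT i).2 ((Finset.sum_eq_sum_iff_of_le fun i _ => (hT i).1).1 h i (Finset.mem_univ i))
  have hQ0 : 0 < ∏ i, (1 - ts i) := Finset.prod_pos fun i _ => hpos1 i
  have hsn : 0 < 1 - s ^ n := by
    linarith [pow_lt_one₀ hs.1.le hs.2 (by omega : n ≠ 0)]
  have htn : 0 < 1 - t ^ n := by
    linarith [pow_lt_one₀ ht.1.le ht.2 (by omega : n ≠ 0)]
  have ht0 := ht.1
  have h1t : 0 < 1 - t := by linarith [ht.2]
  have hL0 : 0 < (∏ i, ts i * (1 - ts i)) / (1 - ∏ i, ts i) := by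
    rw [Finset.prod_mul_distrib, hP]
    rw [hP] at hP0
    positivity
  have hR0 : 0 < t ^ n * (1 - t) ^ n / (1 - t ^ n) := by positivity
  have hL : Real.log ((∏ i, ts i * (1 - ts i)) / (1 - ∏ i, ts i)) =
      n * Real.log s + ∑ i, Real.log (1 - ts i) - Real.log (1 - s ^ n) := by
    rw [Finset.prod_mul_distrib, Real.log_div (by positivity) (by rw [hP]; exact hsn.ne'),
      Real.log_mul hP0.ne' hQ0.ne', Real.log_prod (fun i _ => (hpos1 i).ne'), hP, Real.log_pow]
  have hR : Real.log (t ^ n * (1 - t) ^ n / (1 - t ^ n)) =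
      n * Real.log t + n * Real.log (1 - t) - Real.log (1 - t ^ n) := by
    rw [Real.log_div (by positivity) htn.ne', Real.log_mul (by positivity) (by positivity),
      Real.log_pow, Real.log_pow]
  refine ⟨(Real.log_le_log_iff hL0 hR0).1 (by rw [hL, hR]; linarith [hB.1]), fun h => ?_, fun h => ?_⟩
  · have h' := congrArg Real.log h
    rw [hL, hR] at h'
    have hst := hB.2 (by linarith [hB.1])
    intro i
    rw [← hst]
    exact hA2 (by linarith [hB.1]) i
  · simp [h, mul_pow]
end
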